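/- Let K be a field, D an m×n matrix over K with column labels g_1,…,g_n ∈ ℤ², and for z ∈ ℤ² let I_z := span{D(*,j) : g_j ≤ z} ⊆ K^m. Then there exist finitely many pairs (u_1,y_1),…,(u_t,y_t) ∈ K^m × ℤ² with u_l ∈ I_{y_l} for each l, such that for every z ∈ ℤ²: (i) I_z = span{u_l : y_l ≤ z}; and (ii) for every nonzero v ∈ I_z there exists l with y_l ≤ z and pivot(u_l) = pivot(v). (Existence of a finite Gröbner basis for the image of a morphism of free 2-parameter persistence modules; a variant of the bigraded reduction computes one.) -/

import Mathlib

/-!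
Only finitely many subspaces `I_z` occur. If `I_z ≠ 0`, choose among the labels below `z` one, `g a`,
with maximal first coordinate and one, `g b`, with maximal second coordinate. The grade
`w = ((g a).1, (g b).2)` lies below `z` and above every label below `z`, so `I_w = I_z`. Hence a
Gröbner basis is obtained by taking all labelled columns together with, for each of the finitely many
grades `((g a).1, (g b).2)` and each index `p`, an element of that graded piece with pivot `p`
whenever there is one (and `0` otherwise).
-/

/-- `i` is the pivot of `v`: the largest index at which `v` is nonzero. -/
def IsPivot {K : Type*} [Field K] {m : ℕ} (v : Fin m → K) (i : Fin m) : Prop :=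
  v i ≠ 0 ∧ ∀ k, v k ≠ 0 → k ≤ i

/-- The grade-`z` piece `I_z = span{D(*,j) : g_j ≤ z}` of the image of a morphism of free
2-parameter persistence modules given in coordinates by `D` with column labels `g`. -/
noncomputable def Ispace {K : Type*} [Field K] {m n : ℕ} (D : Matrix (Fin m) (Fin n) K)
    (g : Fin n → ℤ × ℤ) (z : ℤ × ℤ) : Submodule K (Fin m → K) :=
  Submodule.span K {w : Fin m → K | ∃ j : Fin n, g j ≤ z ∧ w = fun i => D i j}

lemma Ispace_mono {K : Type*} [Field K] {m n : ℕ} (D : Matrix (Fin m) (Fin n) K)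
    (g : Fin n → ℤ × ℤ) {y z : ℤ × ℤ} (h : y ≤ z) : Ispace D g y ≤ Ispace D g z := by
  apply Submodule.span_mono
  rintro w ⟨j, hj, rfl⟩
  exact ⟨j, hj.trans h, rfl⟩

lemma exists_isPivot {K : Type*} [Field K] {m : ℕ} {v : Fin m → K} (hv : v ≠ 0) :
    ∃ p, IsPivot v p := by
  classical
  obtain ⟨i, hi⟩ := Function.ne_iff.mp hv
  obtain ⟨p, hp, hmax⟩ := (Finset.univ.filter fun k => v k ≠ 0).exists_max_image id
    ⟨i, by simpa using hi⟩
  exact ⟨p, by simpa using hp, fun k hk => hmax k (by simpa using hk)⟩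

/-- A nonzero element of `I_z` already lies in the piece at a grade `((g a).1, (g b).2) ≤ z`, by taking coordinatewise maxima of the labels below `z`. -/
lemma exists_grade {K : Type*} [Field K] {m n : ℕ} (D : Matrix (Fin m) (Fin n) K)
    (g : Fin n → ℤ × ℤ) {z : ℤ × ℤ} {v : Fin m → K} (hv : v ∈ Ispace D g z) (hv0 : v ≠ 0) :
    ∃ a b, (((g a).1, (g b).2) : ℤ × ℤ) ≤ z ∧ v ∈ Ispace D g ((g a).1, (g b).2) := by
  classical
  have hne : (Finset.univ.filter fun j => g j ≤ z).Nonempty := by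
    by_contra hempty
    have hno : ∀ j, ¬ g j ≤ z := by
      intro j hj
      exact hempty ⟨j, by simpa using hj⟩
    apply hv0
    simpa [Ispace, hno] using hv
  obtain ⟨a, ha, hamax⟩ := Finset.exists_max_image _ (fun j => (g j).1) hne
  obtain ⟨b, hb, hbmax⟩ := Finset.exists_max_image _ (fun j => (g j).2) hne
  simp only [Finset.mem_filter, Finset.mem_univ, true_and] at ha hb hamax hbmax
  refine ⟨a, b, ⟨ha.1, hb.2⟩, ?_⟩
  refine (Submodule.span_mono ?_ : Ispace D g z ≤ _) hv
  rintro w ⟨j, hj, rfl⟩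
  exact ⟨j, ⟨hamax j hj, hbmax j hj⟩, rfl⟩

/-- Existence of a finite Gröbner basis for the image of a morphism of free 2-parameter
persistence modules: there are finitely many homogeneous pairs `(u_l, y_l)` with
`u_l ∈ I_{y_l}` such that for every grade `z`, (i) `I_z = span{u_l : y_l ≤ z}` and
(ii) every nonzero `v ∈ I_z` has the same pivot as some `u_l` with `y_l ≤ z` (the leading
terms of the `u_l` generate all leading terms). -/
theorem exists_groebner_basis_of_image {K : Type*} [Field K] {m n : ℕ}
    (D : Matrix (Fin m) (Fin n) K) (g : Fin n → ℤ × ℤ) :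
    ∃ (t : ℕ) (u : Fin t → Fin m → K) (y : Fin t → ℤ × ℤ),
      (∀ l : Fin t, u l ∈ Ispace D g (y l)) ∧
      (∀ z : ℤ × ℤ,
        Ispace D g z = Submodule.span K {w : Fin m → K | ∃ l : Fin t, y l ≤ z ∧ w = u l}) ∧
      (∀ z : ℤ × ℤ, ∀ v ∈ Ispace D g z, v ≠ 0 →
        ∃ l : Fin t, y l ≤ z ∧ ∃ p : Fin m, IsPivot (u l) p ∧ IsPivot v p) := by
  classical
  have hex : ∀ (y : ℤ × ℤ) (p : Fin m), ∃ u ∈ Ispace D g y,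
      (∃ v ∈ Ispace D g y, IsPivot v p) → IsPivot u p := by
    intro y p
    by_cases h : ∃ v ∈ Ispace D g y, IsPivot v p
    · obtain ⟨v, hv, hp⟩ := h
      exact ⟨v, hv, fun _ => hp⟩
    · exact ⟨0, Submodule.zero_mem _, fun h' => absurd h' h⟩
  choose w hw hwp using hex
  let e := Fintype.equivFin (Fin n ⊕ (Fin n × Fin n × Fin m))
  let U : Fin n ⊕ (Fin n × Fin n × Fin m) → Fin m → K :=
    Sum.elim (fun j i => D i j) (fun x => w ((g x.1).1, (g x.2.1).2) x.2.2)
  let Y : Fin n ⊕ (Fin n × Fin n × Fin m) → ℤ × ℤ :=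
    Sum.elim g (fun x => ((g x.1).1, (g x.2.1).2))
  have hUY : ∀ x, U x ∈ Ispace D g (Y x) := by
    rintro (j | x)
    · exact Submodule.subset_span ⟨j, le_rfl, rfl⟩
    · exact hw _ _
  refine ⟨_, fun l => U (e.symm l), fun l => Y (e.symm l), fun l => hUY _, fun z => ?_, ?_⟩
  · apply le_antisymm
    · apply Submodule.span_mono
      rintro _ ⟨j, hj, rfl⟩
      exact ⟨e (Sum.inl j), by simpa [Y] using hj, by simp [U]⟩
    · rw [Submodule.span_le]
      rintro _ ⟨l, hl, rfl⟩
      exact Ispace_mono D g hl (hUY _)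
  · intro z v hv hv0
    obtain ⟨a, b, hab, hvab⟩ := exists_grade D g hv hv0
    obtain ⟨p, hp⟩ := exists_isPivot hv0
    refine ⟨e (Sum.inr (a, b, p)), by simpa [Y] using hab, p, ?_, hp⟩
    simpa [U] using hwp _ p ⟨v, hvab, hp⟩
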